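/- Let P ∈ 𝒫(Z) be a local maximizer of Q ↦ B(Q,ℰ) on 𝒫(Z) with u := P − Π_P ≠ 0. Then for every Q ∈ 𝒫(Z) with B(Q,ℰ) ≤ B(P,ℰ) one has B_u(Q) ≤ B_u(P); in particular, P is a local maximizer of Q ↦ B_u(Q) on 𝒫(Z). -/

import Mathlib

theorem aux_tangent (b b' : ℝ → ℝ)
    (hc : ContinuousOn b (Set.Ici 0))
    (hsc : StrictConvexOn ℝ (Set.Ioi 0) b)
    (hd : ∀ x, 0 < x → HasDerivAt b (b' x) x)
    (a x : ℝ) (ha : 0 < a) (hx : 0 ≤ x) : b a + b' a * (x - a) ≤ b x := by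
  have pos : ∀ y, 0 < y → b a + b' a * (y - a) ≤ b y := by
    intro y hy
    rcases lt_trichotomy y a with h | h | h
    · have := hsc.convexOn.slope_le_of_hasDerivAt (x := y) (y := a) hy ha h (hd a ha)
      rw [slope_def_field, div_le_iff₀ (by linarith)] at this
      nlinarith
    · subst h; simp
    · have := hsc.convexOn.le_slope_of_hasDerivAt (x := a) (y := y) ha hy h (hd a ha)
      rw [slope_def_field, le_div_iff₀ (by linarith)] at this
      nlinarith
  rcases hx.lt_or_eq with h | h
  · exact pos x h
  · subst h
    have h1 : Filter.Tendsto b (nhdsWithin 0 (Set.Ioi 0)) (nhds (b 0)) :=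
      (hc 0 (by simp)).mono_left (nhdsWithin_mono _ Set.Ioi_subset_Ici_self)
    have h2 : Filter.Tendsto (fun y => b a + b' a * (y - a)) (nhdsWithin 0 (Set.Ioi 0))
        (nhds (b a + b' a * (0 - a))) := by
      apply tendsto_nhdsWithin_of_tendsto_nhds
      apply Continuous.tendsto
      fun_prop
    exact le_of_tendsto_of_tendsto h2 h1 (by
      filter_upwards [self_mem_nhdsWithin] with y hy using pos y hy)

theorem aux_mono (b b' : ℝ → ℝ)
    (ht : ∀ a x, 0 < a → 0 ≤ x → b a + b' a * (x - a) ≤ b x)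
    (x y : ℝ) (hx : 0 < x) (hxy : x ≤ y) : b' x ≤ b' y := by
  have h1 := ht x y hx (by linarith)
  have h2 := ht y x (by linarith) hx.le
  rcases hxy.lt_or_eq with h | h
  · by_contra hh
    nlinarith
  · rw [h]

theorem aux_pos {Z : Type} [Fintype Z] [Nonempty Z] {d : ℕ}
    (β β' : Z → ℝ → ℝ)
    (ht : ∀ z a x, 0 < a → 0 ≤ x → β z a + β' z a * (x - a) ≤ β z x)
    (hβ'bot : ∀ z, Filter.Tendsto (β' z) (nhdsWithin 0 (Set.Ioi 0)) Filter.atBot)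
    (f : Z → Fin d → ℝ) (m : Fin d → ℝ) (k : ℝ)
    (Q : Z → ℝ) (hQ : Q ∈ stdSimplex ℝ Z)
    (hmin : ∀ R ∈ stdSimplex ℝ Z, ∑ z, β z (Q z) + k * ∑ i, (∑ z, Q z * f z i - m i) ^ 2
      ≤ ∑ z, β z (R z) + k * ∑ i, (∑ z, R z * f z i - m i) ^ 2) (w : Z) : 0 < Q w := by
  classical
  by_contra hw
  have hw0 : Q w = 0 := le_antisymm (not_lt.1 hw) (hQ.1 w)
  have hcard : (0:ℝ) < Fintype.card Z := by exact_mod_cast Fintype.card_pos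
  obtain ⟨r, hr⟩ : ∃ r : ℝ, r = 1 / Fintype.card Z := ⟨_, rfl⟩
  have hr0 : 0 < r := by rw [hr]; positivity
  have hsum : ∑ _z : Z, r = 1 := by simp [hr, hcard.ne']
  obtain ⟨v, hv⟩ : ∃ v : Fin d → ℝ, v = fun i => ∑ z, (r - Q z) * f z i := ⟨_, rfl⟩
  obtain ⟨c, hc⟩ : ∃ c : Fin d → ℝ, c = fun i => ∑ z, Q z * f z i - m i := ⟨_, rfl⟩
  -- main inequality
  have key : ∀ t, 0 < t → t < 1 →
      - (k * (2 * ∑ i, c i * v i + t * ∑ i, v i ^ 2)) ≤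
      (∑ y ∈ Finset.univ.erase w, β' y r * (r - Q y)) + β' w (t * r) * r := by
    intro t t0 t1
    have hposR : ∀ y, 0 < Q y + t * (r - Q y) := by
      intro y
      have := hQ.1 y
      nlinarith [mul_pos t0 hr0, mul_nonneg this (by linarith : 0 ≤ 1 - t)]
    have hm := hmin (fun y => Q y + t * (r - Q y)) ⟨fun y => (hposR y).le, by
      rw [Finset.sum_add_distrib, ← Finset.mul_sum, Finset.sum_sub_distrib, hsum, hQ.2]; ring⟩
    have e1 : ∀ i, ∑ z, (Q z + t * (r - Q z)) * f z i - m i = c i + t * v i := by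
      intro i
      simp only [hv, hc, add_mul, Finset.sum_add_distrib, Finset.mul_sum, mul_assoc]
      ring
    have e2 : ∀ i, ∑ z, Q z * f z i - m i = c i := by intro i; simp [hc]
    simp only [e1, e2] at hm
    have e3 : ∑ i, (c i + t * v i) ^ 2 =
        ∑ i, c i ^ 2 + t * (2 * ∑ i, c i * v i + t * ∑ i, v i ^ 2) := by
      simp only [Finset.mul_sum, ← Finset.sum_add_distrib]
      refine Finset.sum_congr rfl fun i _ => by ring
    rw [e3] at hm
    have hb : ∑ y, β y (Q y + t * (r - Q y)) - t * ∑ y, β' y (Q y + t * (r - Q y)) * (r - Q y)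
        ≤ ∑ y, β y (Q y) := by
      rw [Finset.mul_sum, ← Finset.sum_sub_distrib]
      refine Finset.sum_le_sum fun y _ => ?_
      have := ht y _ (Q y) (hposR y) (hQ.1 y)
      linarith
    have h3 : t * (-(k * (2 * ∑ i, c i * v i + t * ∑ i, v i ^ 2))) ≤
        t * ∑ y, β' y (Q y + t * (r - Q y)) * (r - Q y) := by linarith
    have h4 := le_of_mul_le_mul_left h3 t0
    refine h4.trans ?_
    rw [← Finset.sum_erase_add _ _ (Finset.mem_univ w)]
    refine add_le_add (Finset.sum_le_sum fun y _ => ?_) (by simp [hw0])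
    rcases le_total (Q y) r with h | h
    · refine mul_le_mul_of_nonneg_right ?_ (by linarith)
      exact aux_mono (β y) (β' y) (ht y) _ _ (hposR y) (by nlinarith)
    · refine mul_le_mul_of_nonpos_right ?_ (by linarith)
      exact aux_mono (β y) (β' y) (ht y) _ _ hr0 (by nlinarith)
  obtain ⟨A, hA⟩ : ∃ A : ℝ, A = ∑ y ∈ Finset.univ.erase w, β' y r * (r - Q y) := ⟨_, rfl⟩
  obtain ⟨L, hL⟩ : ∃ L : ℝ, L = |k| * (2 * |∑ i, c i * v i| + ∑ i, v i ^ 2) := ⟨_, rfl⟩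
  have hT : Filter.Tendsto (fun t : ℝ => t * r) (nhdsWithin 0 (Set.Ioi 0))
      (nhdsWithin 0 (Set.Ioi 0)) := by
    refine tendsto_nhdsWithin_iff.2 ⟨?_, ?_⟩
    · apply tendsto_nhdsWithin_of_tendsto_nhds
      have : Continuous fun t : ℝ => t * r := by fun_prop
      simpa using this.tendsto 0
    · filter_upwards [self_mem_nhdsWithin] with t ht
      exact mul_pos ht hr0
  have ev1 := ((hβ'bot w).comp hT).eventually (Filter.eventually_lt_atBot ((-L - A) / r))
  have ev2 : ∀ᶠ t : ℝ in nhdsWithin 0 (Set.Ioi 0), t ∈ Set.Ioo (0:ℝ) 1 :=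
    Ioo_mem_nhdsGT one_pos
  obtain ⟨t, h1, h2⟩ := (ev1.and ev2).exists
  have hk := key t h2.1 h2.2
  rw [← hA] at hk
  simp only [Function.comp] at h1
  rw [lt_div_iff₀ hr0] at h1
  have hS : 0 ≤ ∑ i, v i ^ 2 := Finset.sum_nonneg fun i _ => sq_nonneg _
  have h5 : k * (2 * ∑ i, c i * v i + t * ∑ i, v i ^ 2) ≤ L := by
    rw [hL]
    refine (le_abs_self _).trans ?_
    rw [abs_mul]
    refine mul_le_mul_of_nonneg_left ?_ (abs_nonneg k)
    refine (abs_add_le _ _).trans ?_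
    rw [abs_mul, abs_mul, abs_of_pos h2.1, abs_of_nonneg hS, abs_two]
    nlinarith [h2.2]
  linarith

theorem aux_crit {Z : Type} [Fintype Z] [Nonempty Z] {d : ℕ}
    (β β' : Z → ℝ → ℝ)
    (hβd : ∀ z x, 0 < x → HasDerivAt (β z) (β' z x) x)
    (f : Z → Fin d → ℝ) (m : Fin d → ℝ) (k : ℝ)
    (Q : Z → ℝ) (hQ : Q ∈ stdSimplex ℝ Z) (hQp : ∀ z, 0 < Q z)
    (hmin : ∀ R ∈ stdSimplex ℝ Z, ∑ z, β z (Q z) + k * ∑ i, (∑ z, Q z * f z i - m i) ^ 2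
      ≤ ∑ z, β z (R z) + k * ∑ i, (∑ z, R z * f z i - m i) ^ 2) :
    ∃ r : ℝ, ∀ z, β' z (Q z) = ∑ i, (-(2 * k * (∑ z, Q z * f z i - m i))) * f z i - r := by
  classical
  obtain ⟨D, hD⟩ : ∃ D : Z → ℝ, D = fun z => β' z (Q z) -
    ∑ i, (-(2 * k * (∑ z, Q z * f z i - m i))) * f z i := ⟨_, rfl⟩
  have main : ∀ s : Z → ℝ, ∑ z, s z = 0 → ∑ z, s z * D z = 0 := by
    intro s hs
    have hder : HasDerivAt (fun t : ℝ => ∑ z, β z (Q z + t * s z) +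
        k * ∑ i, (∑ z, (Q z + t * s z) * f z i - m i) ^ 2)
        (∑ z, β' z (Q z) * s z +
          k * ∑ i, (2 * (∑ z, Q z * f z i - m i) * ∑ z, s z * f z i)) 0 := by
      refine HasDerivAt.add ?_ (HasDerivAt.const_mul k ?_)
      · refine HasDerivAt.fun_sum fun z _ => ?_
        have h1 : HasDerivAt (fun t : ℝ => Q z + t * s z) (s z) 0 := by
          simpa using ((hasDerivAt_id (0:ℝ)).mul_const (s z)).const_add (Q z)
        have h2 : HasDerivAt (β z) (β' z (Q z)) (Q z + 0 * s z) := by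
          simpa using hβd z _ (hQp z)
        exact HasDerivAt.comp (0:ℝ) h2 h1
      · refine HasDerivAt.fun_sum fun i _ => ?_
        have h1 : HasDerivAt (fun t : ℝ => ∑ z, (Q z + t * s z) * f z i - m i)
            (∑ z, s z * f z i) 0 := by
          refine HasDerivAt.sub_const _ (HasDerivAt.fun_sum fun z _ => ?_)
          have h1 : HasDerivAt (fun t : ℝ => Q z + t * s z) (s z) 0 := by
            simpa using ((hasDerivAt_id (0:ℝ)).mul_const (s z)).const_add (Q z)
          exact h1.mul_const _
        simpa using h1.fun_pow 2
    have hloc : IsLocalMin (fun t : ℝ => ∑ z, β z (Q z + t * s z) +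
        k * ∑ i, (∑ z, (Q z + t * s z) * f z i - m i) ^ 2) 0 := by
      have hev : ∀ᶠ t : ℝ in nhds 0, ∀ z, 0 < Q z + t * s z := by
        rw [Filter.eventually_all]
        intro z
        have : Continuous fun t : ℝ => Q z + t * s z := by fun_prop
        exact this.continuousAt.eventually (lt_mem_nhds (by simpa using hQp z))
      filter_upwards [hev] with t ht
      have := hmin (fun z => Q z + t * s z) ⟨fun z => (ht z).le, by
        rw [Finset.sum_add_distrib, ← Finset.mul_sum, hs, hQ.2]; simp⟩
      simpa using this
    have h0 := hloc.hasDerivAt_eq_zero hder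
    rw [← h0]
    obtain ⟨a, ha⟩ : ∃ a : Fin d → ℝ, ∀ i, ∑ z, Q z * f z i - m i = a i :=
      ⟨_, fun _ => rfl⟩
    simp only [hD, ha, mul_sub, Finset.sum_sub_distrib, Finset.mul_sum]
    rw [Finset.sum_comm (s := Finset.univ (α := Z)) (t := Finset.univ (α := Fin d)),
      sub_eq_add_neg, ← Finset.sum_neg_distrib]
    congr 1
    · exact Finset.sum_congr rfl fun z _ => by ring
    · refine Finset.sum_congr rfl fun i _ => ?_
      rw [← Finset.sum_neg_distrib]
      exact Finset.sum_congr rfl fun z _ => by ring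
  obtain ⟨z0⟩ := ‹Nonempty Z›
  refine ⟨- D z0, fun z => ?_⟩
  have := main (fun y => (if y = z then 1 else 0) - (if y = z0 then 1 else 0)) (by simp)
  simp only [sub_mul, ite_mul, one_mul, zero_mul, Finset.sum_sub_distrib, Finset.sum_ite_eq',
    Finset.mem_univ, if_true] at this
  have e : D z = β' z (Q z) - ∑ i, (-(2 * k * (∑ z, Q z * f z i - m i))) * f z i := by rw [hD]
  linarith

theorem aux_penalty {Z : Type} [Fintype Z] [Nonempty Z] {d : ℕ}
    (β : Z → ℝ → ℝ)
    (hβc : ∀ z, ContinuousOn (β z) (Set.Ici 0))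
    (f : Z → Fin d → ℝ) (m : Fin d → ℝ) (R : Z → ℝ) (hR : R ∈ stdSimplex ℝ Z)
    (hRm : ∀ i, ∑ z, R z * f z i = m i)
    (hmin : ∀ Q ∈ stdSimplex ℝ Z, (∀ i, ∑ z, Q z * f z i = m i) →
      ∑ z, β z (R z) ≤ ∑ z, β z (Q z))
    (ε : ℝ) (hε : 0 < ε) :
    ∃ k : ℝ, 0 ≤ k ∧ ∃ Q ∈ stdSimplex ℝ Z,
      (∀ S ∈ stdSimplex ℝ Z, ∑ z, β z (Q z) + k * ∑ i, (∑ z, Q z * f z i - m i) ^ 2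
      ≤ ∑ z, β z (S z) + k * ∑ i, (∑ z, S z * f z i - m i) ^ 2) ∧
      ∑ z, β z (R z) - ε < ∑ z, β z (Q z) := by
  have hcpt := isCompact_stdSimplex ℝ Z
  have hHc : ContinuousOn (fun Q : Z → ℝ => ∑ z, β z (Q z)) (stdSimplex ℝ Z) := by
    refine continuousOn_finsetSum _ fun z _ => ?_
    exact (hβc z).comp (continuous_apply z).continuousOn fun Q hQ => hQ.1 z
  have hSc : Continuous (fun Q : Z → ℝ => ∑ i, (∑ z, Q z * f z i - m i) ^ 2) := by fun_prop
  have hex : ∀ k : ℝ, ∃ Q ∈ stdSimplex ℝ Z,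
      (∀ S ∈ stdSimplex ℝ Z, ∑ z, β z (Q z) + k * ∑ i, (∑ z, Q z * f z i - m i) ^ 2
      ≤ ∑ z, β z (S z) + k * ∑ i, (∑ z, S z * f z i - m i) ^ 2) := by
    intro k
    obtain ⟨Q, hQ, h⟩ := hcpt.exists_isMinOn ⟨R, hR⟩
      (hHc.add ((continuous_const (y := k)).mul hSc).continuousOn)
    exact ⟨Q, hQ, fun S hS => h hS⟩
  obtain ⟨Q0, hQ0, h0⟩ := hcpt.exists_isMinOn ⟨R, hR⟩ hHc
  have hlow : ∀ Q ∈ stdSimplex ℝ Z, ∑ z, β z (Q0 z) ≤ ∑ z, β z (Q z) := fun Q hQ => h0 hQ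
  have hKc : IsCompact (stdSimplex ℝ Z ∩
      (fun Q : Z → ℝ => ∑ z, β z (Q z)) ⁻¹' Set.Iic (∑ z, β z (R z) - ε)) :=
    hcpt.of_isClosed_subset
      (hHc.preimage_isClosed_of_isClosed hcpt.isClosed isClosed_Iic) Set.inter_subset_left
  rcases Set.eq_empty_or_nonempty (stdSimplex ℝ Z ∩
      (fun Q : Z → ℝ => ∑ z, β z (Q z)) ⁻¹' Set.Iic (∑ z, β z (R z) - ε)) with hE | hE
  · obtain ⟨Q, hQ, h⟩ := hex 0
    refine ⟨0, le_rfl, Q, hQ, h, ?_⟩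
    by_contra hc
    have : Q ∈ (∅ : Set (Z → ℝ)) := hE ▸ ⟨hQ, not_lt.1 hc⟩
    exact this
  · obtain ⟨Q1, hQ1, h1⟩ := hKc.exists_isMinOn hE hSc.continuousOn
    obtain ⟨g, hg⟩ : ∃ g : ℝ, g = ∑ i, (∑ z, Q1 z * f z i - m i) ^ 2 := ⟨_, rfl⟩
    have hg0 : 0 ≤ g := by rw [hg]; exact Finset.sum_nonneg fun i _ => sq_nonneg _
    have hgp : 0 < g := by
      refine lt_of_le_of_ne hg0 fun h => ?_
      rw [hg] at h
      have h2 := (Finset.sum_eq_zero_iff_of_nonneg fun i _ => sq_nonneg _).1 h.symm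
      have h3 := hmin Q1 hQ1.1 fun i => by
        have := h2 i (Finset.mem_univ i)
        have := pow_eq_zero_iff (two_ne_zero) |>.1 this
        linarith
      have h4 : ∑ z, β z (Q1 z) ≤ ∑ z, β z (R z) - ε := hQ1.2
      linarith
    have hk0 : 0 ≤ (∑ z, β z (R z) - ∑ z, β z (Q0 z)) / g :=
      div_nonneg (by linarith [hlow R hR]) hg0
    obtain ⟨Q, hQ, h⟩ := hex ((∑ z, β z (R z) - ∑ z, β z (Q0 z)) / g + 1)
    refine ⟨_, by linarith, Q, hQ, h, ?_⟩
    by_contra hc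
    have hge : g ≤ ∑ i, (∑ z, Q z * f z i - m i) ^ 2 := by
      rw [hg]; exact h1 ⟨hQ, not_lt.1 hc⟩
    have hh := h R hR
    have hz : ∑ i, (∑ z, R z * f z i - m i) ^ 2 = 0 := by simp [hRm]
    rw [hz] at hh
    have h5 := mul_le_mul_of_nonneg_left hge
      (by linarith : 0 ≤ (∑ z, β z (R z) - ∑ z, β z (Q0 z)) / g + 1)
    rw [add_mul, div_mul_cancel₀ _ hgp.ne'] at h5
    have := hlow Q hQ
    linarith


theorem stmt_18 {Z : Type} [Fintype Z] [Nonempty Z] {d : ℕ}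
    (β β' : Z → ℝ → ℝ)
    (hβc : ∀ z, ContinuousOn (β z) (Set.Ici 0))
    (hβsc : ∀ z, StrictConvexOn ℝ (Set.Ioi 0) (β z))
    (hβd : ∀ z x, 0 < x → HasDerivAt (β z) (β' z x) x)
    (hβ'bot : ∀ z, Filter.Tendsto (β' z) (nhdsWithin 0 (Set.Ioi 0)) Filter.atBot)
    (hβ'top : ∀ z, Filter.Tendsto (β' z) Filter.atTop Filter.atTop)
    (e : Z → ℝ → ℝ)
    (he_pos : ∀ z r, 0 < e z r)
    (he_left : ∀ z r, β' z (e z r) = r)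
    (he_right : ∀ z x, 0 < x → e z (β' z x) = x)
    (f : Z → Fin d → ℝ)
    (prob : Set (Z → ℝ))
    (hprob : prob = {P : Z → ℝ | (∀ z, 0 ≤ P z) ∧ (∑ z, P z) = 1})
    (μ : (Z → ℝ) → Fin d → ℝ)
    (hμ : ∀ P i, μ P i = ∑ z, P z * f z i)
    (H : (Z → ℝ) → ℝ)
    (hH : ∀ Q, H Q = ∑ z, β z (Q z))
    (Λ : (Fin d → ℝ) → ℝ)
    (hΛ : ∀ θ, (∑ z, e z ((∑ i, θ i * f z i) - Λ θ)) = 1)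
    (Pθ : (Fin d → ℝ) → Z → ℝ)
    (hPθ : ∀ θ z, Pθ θ z = e z ((∑ i, θ i * f z i) - Λ θ))
    (Bdiv : (Z → ℝ) → (Z → ℝ) → ℝ)
    (hBdiv : ∀ P Q, Bdiv P Q = ∑ z, (β z (P z) - β z (Q z) - β' z (Q z) * (P z - Q z)))
    (BE : (Z → ℝ) → ℝ)
    (hBE : ∀ P, BE P = ⨅ θ, Bdiv P (Pθ θ))
    (Pr : (Z → ℝ) → Z → ℝ)
    (hPr : ∀ P ∈ prob, Pr P ∈ prob ∧ μ (Pr P) = μ P ∧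
      (∀ Q ∈ prob, μ Q = μ P → H (Pr P) ≤ H Q) ∧
      (∀ Q ∈ prob, μ Q = μ P → H Q = H (Pr P) → Q = Pr P))
    (Pru : (Z → ℝ) → (Z → ℝ) → Z → ℝ)
    (hPru : ∀ u : Z → ℝ, (∑ z, u z) = 0 → u ≠ 0 → ∀ Q ∈ prob,
      Pru u Q ∈ prob ∧ (∃ t : ℝ, ∀ z, Pru u Q z - Q z = t * u z) ∧
      (∀ R ∈ prob, (∃ t : ℝ, ∀ z, R z - Q z = t * u z) → H (Pru u Q) ≤ H R) ∧
      (∀ R ∈ prob, (∃ t : ℝ, ∀ z, R z - Q z = t * u z) → H R = H (Pru u Q) → R = Pru u Q))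
    (Pplus : (Z → ℝ) → Set (Z → ℝ))
    (hPplus : ∀ u, Pplus u = {Q | Q ∈ prob ∧ 0 < ∑ z, (Q z - Pru u Q z) * u z})
    (Bu : (Z → ℝ) → (Z → ℝ) → ℝ)
    (hBu : ∀ u Q, Bu u Q = H Q - H (Pru u Q))
    (Bbar : (Z → ℝ) → ℝ)
    (hBbar : ∀ u, Bbar u = sSup (Bu u '' closure (Pplus u)))
    (P : Z → ℝ) (hP : P ∈ prob)
    (hmax : IsLocalMaxOn BE prob P)
    (hne : P - Pr P ≠ 0) :
    (∀ Q ∈ prob, BE Q ≤ BE P → Bu (P - Pr P) Q ≤ Bu (P - Pr P) P) ∧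
    IsLocalMaxOn (Bu (P - Pr P)) prob P := by

  have hps : prob = stdSimplex ℝ Z := by rw [hprob]; rfl
  subst hps
  have ht : ∀ z a x, 0 < a → 0 ≤ x → β z a + β' z a * (x - a) ≤ β z x :=
    fun z a x ha hx => aux_tangent (β z) (β' z) (hβc z) (hβsc z) (hβd z) a x ha hx
  have hmono : ∀ z, StrictMono (e z) := by
    intro z a b hab
    by_contra hh
    have := aux_mono (β z) (β' z) (ht z) _ _ (he_pos z b) (not_lt.1 hh)
    rw [he_left, he_left] at this
    linarith
  have hBnn : ∀ R ∈ stdSimplex ℝ Z, ∀ θ, 0 ≤ Bdiv R (Pθ θ) := by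
    intro R hR θ
    rw [hBdiv]
    refine Finset.sum_nonneg fun z _ => ?_
    have := ht z (Pθ θ z) (R z) (by rw [hPθ]; exact he_pos _ _) (hR.1 z)
    linarith
  -- expansion of the divergence
  have hexp : ∀ R ∈ stdSimplex ℝ Z, ∀ θ, Bdiv R (Pθ θ) =
      H R - H (Pθ θ) - ∑ i, θ i * (μ R i - μ (Pθ θ) i) := by
    intro R hR θ
    have hs : ∑ z, Pθ θ z = 1 := by simp only [hPθ]; exact hΛ θ
    have e1 : ∀ z, β' z (Pθ θ z) = ∑ i, θ i * f z i - Λ θ := fun z => by rw [hPθ, he_left]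
    rw [hBdiv, hH, hH, Finset.sum_sub_distrib, Finset.sum_sub_distrib]
    congr 1
    simp only [e1, sub_mul, Finset.sum_sub_distrib, hμ]
    rw [← Finset.mul_sum, Finset.sum_sub_distrib, hs, hR.2, sub_self, mul_zero, sub_zero]
    simp only [Finset.sum_mul, ← Finset.sum_sub_distrib, Finset.mul_sum]
    rw [Finset.sum_comm]
    refine Finset.sum_congr rfl fun i _ => Finset.sum_congr rfl fun z _ => by ring
  have hbdd : ∀ R ∈ stdSimplex ℝ Z, BddBelow (Set.range fun θ => Bdiv R (Pθ θ)) := by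
    intro R hR
    exact ⟨0, by rintro _ ⟨θ, rfl⟩; exact hBnn R hR θ⟩
  obtain ⟨hPi, hPiμ, hPimin, -⟩ := hPr P hP
  obtain ⟨u, hu⟩ : ∃ u, u = P - Pr P := ⟨_, rfl⟩
  rw [← hu] at hne ⊢
  have huz : ∀ z, u z = P z - Pr P z := fun z => by rw [hu]; rfl
  have hu0 : ∑ z, u z = 0 := by
    simp only [huz, Finset.sum_sub_distrib, hP.2, hPi.2, sub_self]
  have huμ : ∀ i, ∑ z, u z * f z i = 0 := by
    intro i
    have := congrFun hPiμ i
    rw [hμ, hμ] at this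
    simp only [huz, sub_mul, Finset.sum_sub_distrib, this, sub_self]
  have hle : ∀ Q ∈ stdSimplex ℝ Z, Bu u Q ≤ BE Q := by
    intro Q hQ
    obtain ⟨hR, ⟨t, htt⟩, -, -⟩ := hPru u hu0 hne Q hQ
    rw [hBE, hBu]
    refine le_ciInf fun θ => ?_
    have h1 := hexp Q hQ θ
    have h2 := hexp _ hR θ
    have h3 := hBnn _ hR θ
    have h4 : μ (Pru u Q) = μ Q := by
      funext i
      rw [hμ, hμ, ← sub_eq_zero, ← Finset.sum_sub_distrib]
      simp only [← sub_mul, htt, mul_assoc]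
      rw [← Finset.mul_sum, huμ, mul_zero]
    rw [h4] at h2
    linarith
  have hge : BE P ≤ Bu u P := by
    obtain ⟨-, -, hmin, -⟩ := hPru u hu0 hne P hP
    have h1 := hmin (Pr P) hPi ⟨-1, fun z => by rw [huz]; ring⟩
    rw [hBu]
    suffices BE P ≤ H P - H (Pr P) by linarith
    refine le_of_forall_pos_le_add fun ε hε => ?_
    obtain ⟨k, hk, Q, hQ, hQmin, hQε⟩ := aux_penalty β hβc f (μ P) (Pr P) hPi
      (fun i => by rw [← hμ, hPiμ])
      (fun Q hQ hQm => by
        rw [← hH, ← hH]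
        exact hPimin Q hQ (by funext i; rw [hμ, hQm])) ε hε
    have hQp := aux_pos β β' ht hβ'bot f (μ P) k Q hQ hQmin
    obtain ⟨r, hr⟩ := aux_crit β β' hβd f (μ P) k Q hQ hQp hQmin
    obtain ⟨θ, hθ⟩ : ∃ θ : Fin d → ℝ, θ = fun i => -(2 * k * (∑ z, Q z * f z i - μ P i)) :=
      ⟨_, rfl⟩
    have hr' : ∀ z, Q z = e z (∑ i, θ i * f z i - r) := by
      intro z
      rw [hθ, ← hr z, he_right z _ (hQp z)]
    have hΛr : Λ θ = r := by
      have hs := hΛ θ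
      have hs2 := hQ.2
      rw [Finset.sum_congr rfl fun z _ => hr' z] at hs2
      rcases lt_trichotomy (Λ θ) r with h | h | h
      · have := Finset.sum_lt_sum_of_nonempty (s := Finset.univ) Finset.univ_nonempty
          fun z _ => hmono z (show (∑ i, θ i * f z i) - r < (∑ i, θ i * f z i) - Λ θ by linarith)
        linarith
      · exact h
      · have := Finset.sum_lt_sum_of_nonempty (s := Finset.univ) Finset.univ_nonempty
          fun z _ => hmono z (show (∑ i, θ i * f z i) - Λ θ < (∑ i, θ i * f z i) - r by linarith)
        linarith
    have hPQ : Pθ θ = Q := by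
      funext z
      rw [hPθ, hΛr, ← hr' z]
    have h2 : BE P ≤ Bdiv P (Pθ θ) := by
      rw [hBE]; exact ciInf_le (hbdd P hP) θ
    rw [hexp P hP θ, hPQ] at h2
    have h3 : 0 ≤ ∑ i, θ i * (μ P i - μ Q i) := by
      refine Finset.sum_nonneg fun i _ => ?_
      rw [hθ]
      simp only [← hμ]
      nlinarith [mul_nonneg hk (sq_nonneg (μ Q i - μ P i))]
    rw [← hH, ← hH] at hQε
    linarith
  have main : ∀ Q ∈ stdSimplex ℝ Z, BE Q ≤ BE P → Bu u Q ≤ Bu u P :=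
    fun Q hQ h => (hle Q hQ).trans (h.trans hge)
  refine ⟨main, ?_⟩
  have hmax' : ∀ᶠ Q in nhdsWithin P (stdSimplex ℝ Z), BE Q ≤ BE P := hmax
  show ∀ᶠ Q in nhdsWithin P (stdSimplex ℝ Z), Bu u Q ≤ Bu u P
  filter_upwards [hmax', self_mem_nhdsWithin] with Q h hQ using main Q hQ h
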